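/- Orthogonality of the hyperoctahedral Hall–Littlewood functions: if t and t_0, t_1, t_2, t_3 are real parameters in (−1,1)∖{0}, then for all λ, μ ∈ Λ with λ ≠ μ one has ∫_{[0,2π]^n} P_λ(ξ) · conj(P_μ(ξ)) · |Δ(ξ)|^2 dξ = 0. -/

import Mathlib

open Finset Complex MeasureTheory

noncomputable section

namespace QB

/-- The partition predicate: `lam` is weakly decreasing with nonnegative parts. -/
def IsPart (n : ℕ) (lam : Fin n → ℤ) : Prop :=
  (∀ i j : Fin n, i ≤ j → lam j ≤ lam i) ∧ ∀ i, 0 ≤ lam i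

instance (n : ℕ) (lam : Fin n → ℤ) : Decidable (IsPart n lam) := by
  unfold IsPart; infer_instance

/-- The cone `Λ` of partitions with at most `n` parts. -/
def Lam (n : ℕ) := {lam : Fin n → ℤ // IsPart n lam}

/-- `λ + e_{J+} - e_{J-}`. -/
def shift (n : ℕ) (lam : Fin n → ℤ) (Jp Jm : Finset (Fin n)) : Fin n → ℤ :=
  fun i => lam i + (if i ∈ Jp then 1 else 0) - (if i ∈ Jm then 1 else 0)

/-- `ε_j(J+, J-)`. -/
def eps (n : ℕ) (Jp Jm : Finset (Fin n)) (i : Fin n) : ℤ :=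
  if i ∈ Jp then 1 else if i ∈ Jm then -1 else 0

/-- the exponent `n - j` in paper indexing (`j = (i : ℕ) + 1`). -/
def en (n : ℕ) (i : Fin n) : ℤ := (n : ℤ) - (i : ℤ) - 1

/-- `t^{n-j}` in paper indexing. -/
def tn (n : ℕ) (t : ℂ) (i : Fin n) : ℂ := t ^ en n i

/-- the ratio `(1-t^{1+k-j})/(1-t^{k-j})` in paper indexing. -/
def rat (n : ℕ) (t : ℂ) (j k : Fin n) : ℂ :=
  (1 - t ^ ((k : ℤ) - (j : ℤ) + 1)) / (1 - t ^ ((k : ℤ) - (j : ℤ)))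

/-- `∏_{1 ≤ j < k ≤ n, λ_j = λ_k, ε_j > ε_k} (1-t^{1+k-j})/(1-t^{k-j})`. -/
def pairProd (n : ℕ) (t : ℂ) (lam : Fin n → ℤ) (Jp Jm : Finset (Fin n)) : ℂ :=
  ∏ j : Fin n, ∏ k : Fin n,
    if j < k ∧ lam j = lam k ∧ eps n Jp Jm j > eps n Jp Jm k then rat n t j k else 1

/-- the coefficient `W_{J+,J-}(λ)` (three-parameter case). -/
def W3 (n : ℕ) (t t0 t1 t2 : ℂ) (lam : Fin n → ℤ) (Jp Jm : Finset (Fin n)) : ℂ :=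
  (∏ j ∈ Jp, if lam j = 0 then
      (1 - t0 * t1 * tn n t j) * (1 - t0 * t2 * tn n t j) * (1 - t1 * t2 * tn n t j) else 1)
  * pairProd n t lam Jp Jm

/-- the coefficient `U_{K,m}(λ)` (three-parameter case). -/
def U3 (n : ℕ) (t t0 t1 t2 : ℂ) (K : Finset (Fin n)) (m : ℕ) (lam : Fin n → ℤ) : ℂ :=
  (-1 : ℂ) ^ m *
  ∑ p ∈ (univ : Finset (Finset (Fin n) × Finset (Fin n))).filter
      (fun p => p.1 ⊆ K ∧ p.2 ⊆ K ∧ Disjoint p.1 p.2 ∧ p.1.card + p.2.card = m),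
    (∏ j ∈ p.1, if lam j = 0 then (1 - t0 * t1 * tn n t j) * (1 - t0 * t2 * tn n t j) else 1) *
    (∏ j ∈ p.2, if lam j = 1 then 1 - t1 * t2 * tn n t j else 1) *
    (∏ j ∈ K, ∏ k ∈ K,
        if lam j = lam k ∧ eps n p.1 p.2 j > eps n p.1 p.2 k then rat n t j k else 1) *
    (∏ j ∈ p.2, ∏ k ∈ p.1, if lam j = lam k + 1 then rat n t j k else 1) *
    (∏ j ∈ K, t0 ^ (-(eps n p.1 p.2 j))) *
    (∏ j ∈ K, ∏ k ∈ K,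
        if j < k ∧ eps n p.1 p.2 j ≠ eps n p.1 p.2 k ∧ eps n p.1 p.2 k = 0
        then t ^ (-(eps n p.1 p.2 j)) else 1) *
    (∏ j ∈ K, ∏ k ∈ K,
        if j < k ∧ lam j = lam k ∧ eps n p.1 p.2 k - eps n p.1 p.2 j = 1 then t⁻¹ else 1)

/-- the difference operator `H_l` (three-parameter case). -/
def H3 (n : ℕ) (t t0 t1 t2 : ℂ) (l : ℕ) (f : Lam n → ℂ) : Lam n → ℂ := fun lam =>
  ∑ p ∈ (univ : Finset (Finset (Fin n) × Finset (Fin n))).filter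
      (fun p => Disjoint p.1 p.2 ∧ p.1.card + p.2.card ≤ l),
    if h : IsPart n (shift n lam.1 p.1 p.2) then
      U3 n t t0 t1 t2 (p.1ᶜ ∩ p.2ᶜ) (l - (p.1.card + p.2.card)) lam.1 *
      W3 n t t0 t1 t2 lam.1 p.1 p.2 * f ⟨_, h⟩
    else 0

/-- the Pieri coefficient `V_{J+,J-}(λ)` (three-parameter case). -/
def V3 (n : ℕ) (t t0 t1 t2 : ℂ) (lam : Fin n → ℤ) (Jp Jm : Finset (Fin n)) : ℂ :=
  (∏ j ∈ Jp, if lam j = 0 then (1 - t0 * t1 * tn n t j) * (1 - t0 * t2 * tn n t j) else 1) *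
  (∏ j ∈ Jm, if lam j = 1 then 1 - t1 * t2 * tn n t j else 1) *
  pairProd n t lam Jp Jm *
  ∏ j : Fin n, t0 ^ (-(eps n Jp Jm j)) * t ^ (-(en n j * eps n Jp Jm j))

/-- the gauge function `h(λ)` (three-parameter case). -/
def h3 (n : ℕ) (t t0 t1 t2 : ℂ) (lam : Fin n → ℤ) : ℂ :=
  ∏ j : Fin n, if 0 < lam j then
    t0 ^ (lam j) * t ^ (en n j * lam j) * (1 - t1 * t2 * tn n t j) else 1

/-- action of the hyperoctahedral group `W_n = S_n ⋉ {-1,1}^n` on `ξ ∈ ℂ^n`. -/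
def act (n : ℕ) (w : Equiv.Perm (Fin n) × (Fin n → Bool)) (xi : Fin n → ℂ) : Fin n → ℂ :=
  fun j => (if w.2 j then -1 else 1) * xi (w.1 j)

/-- the factor `C_λ(ξ)`. -/
def Cf (n : ℕ) (t t0 t1 t2 t3 : ℂ) (lam : Fin n → ℤ) (xi : Fin n → ℂ) : ℂ :=
  (∏ j : Fin n, ∏ k : Fin n, if j < k then
      ((1 - t * exp (I * (xi j - xi k))) * (1 - t * exp (I * (xi j + xi k)))) /
      ((1 - exp (I * (xi j - xi k))) * (1 - exp (I * (xi j + xi k)))) else 1) *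
  ∏ j : Fin n, if 0 < lam j then
      ((1 - t0 * exp (I * xi j)) * (1 - t1 * exp (I * xi j)) *
       (1 - t2 * exp (I * xi j)) * (1 - t3 * exp (I * xi j))) / (1 - exp (2 * I * xi j))
    else 1

/-- the normalization constant `c_λ`. -/
def ccf (n : ℕ) (t t0 t1 t2 t3 : ℂ) (lam : Fin n → ℤ) : ℂ :=
  ∏ j : Fin n,
    (t0 ^ (lam j) * t ^ (en n j * lam j) * (1 - t)) /
    ((1 - t ^ ((j : ℤ) + 1)) * (if lam j = 0 then 1 + tn n t j else 1) *
     (if lam j = 0 then 1 else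
        (1 - t0 * t1 * tn n t j) * (1 - t0 * t2 * tn n t j) * (1 - t0 * t3 * tn n t j)))

/-- the hyperoctahedral Hall–Littlewood function `P_λ(ξ)`. -/
def P (n : ℕ) (t t0 t1 t2 t3 : ℂ) (lam : Fin n → ℤ) (xi : Fin n → ℂ) : ℂ :=
  ccf n t t0 t1 t2 t3 lam *
  ∑ w : Equiv.Perm (Fin n) × (Fin n → Bool),
    Cf n t t0 t1 t2 t3 lam (act n w xi) *
    exp (-I * ∑ j : Fin n, (lam j : ℂ) * act n w xi j)

/-- the symmetric function `E_l(ξ)` (eigenvalue). -/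
def E (n : ℕ) (t t0 : ℂ) (l : ℕ) (xi : Fin n → ℂ) : ℂ :=
  ∑ S ∈ Finset.powersetCard l (univ : Finset (Fin n)),
    if h : S.card = l then
      ∏ k : Fin l,
        (2 * Complex.cos (xi ((S.orderIsoOfFin h k).1)) -
         t0 * t ^ ((((S.orderIsoOfFin h k).1 : ℕ) : ℤ) - (k : ℤ)) -
         t0⁻¹ * t ^ (-((((S.orderIsoOfFin h k).1 : ℕ) : ℤ) - (k : ℤ))))
    else 0

/-- `ξ` is generic: all factors `C_μ(wξ)` are defined (no vanishing denominators). -/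
def Generic (n : ℕ) (xi : Fin n → ℂ) : Prop :=
  ∀ w : Equiv.Perm (Fin n) × (Fin n → Bool),
    (∀ j k : Fin n, j < k →
      1 - exp (I * (act n w xi j - act n w xi k)) ≠ 0 ∧
      1 - exp (I * (act n w xi j + act n w xi k)) ≠ 0) ∧
    ∀ j : Fin n, 1 - exp (2 * I * act n w xi j) ≠ 0

/-- the weight function `Δ(ξ)`. -/
def Dlt (n : ℕ) (t t0 t1 t2 t3 : ℂ) (xi : Fin n → ℂ) : ℂ :=
  (∏ j : Fin n, ∏ k : Fin n, if j < k then
      ((1 - exp (I * (xi j - xi k))) * (1 - exp (I * (xi j + xi k)))) /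
      ((1 - t * exp (I * (xi j - xi k))) * (1 - t * exp (I * (xi j + xi k)))) else 1) *
  ∏ j : Fin n, (1 - exp (2 * I * xi j)) /
    ((1 - t0 * exp (I * xi j)) * (1 - t1 * exp (I * xi j)) *
     (1 - t2 * exp (I * xi j)) * (1 - t3 * exp (I * xi j)))

/-- `m_0(λ)`. -/
def m0c (n : ℕ) (lam : Fin n → ℤ) : ℕ := (univ.filter fun j => lam j = 0).card

/-- `m_1(λ)`. -/
def m1c (n : ℕ) (lam : Fin n → ℤ) : ℕ := (univ.filter fun j => lam j = 1).card

/-- `m_1^+(λ)` relative to `J_+`. -/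
def m1p (n : ℕ) (lam : Fin n → ℤ) (Jp : Finset (Fin n)) : ℕ :=
  (Jp.filter fun j => lam j = 1).card

/-- the Pieri coefficient `V_{J+,J-}(λ)` (four-parameter case). -/
def V4 (n : ℕ) (t t0 t1 t2 t3 : ℂ) (lam : Fin n → ℤ) (Jp Jm : Finset (Fin n)) : ℂ :=
  (∏ j ∈ Jp, if lam j = 0 then
      ((1 - t0*t1*t2*t3 * t ^ (en n j + (m0c n lam : ℤ) + (m1c n lam : ℤ) - (m1p n lam Jp : ℤ))) *
       ((1 - t0 * t1 * tn n t j) * (1 - t0 * t2 * tn n t j) * (1 - t0 * t3 * tn n t j))) /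
      ((1 - t0*t1*t2*t3 * t ^ (2 * en n j)) * (1 - t0*t1*t2*t3 * t ^ (2 * en n j + 1)))
    else 1) *
  (∏ j ∈ Jp, if lam j = 1 then 1 - t0*t1*t2*t3 * t ^ (en n j + (m0c n lam : ℤ)) else 1) *
  (∏ j ∈ Jm, if lam j = 1 then
      ((1 - t0*t1*t2*t3 * t ^ (en n j - 1)) *
       ((1 - t1 * t2 * tn n t j) * (1 - t1 * t3 * tn n t j) * (1 - t2 * t3 * tn n t j))) /
      ((1 - t0*t1*t2*t3 * t ^ (2 * en n j)) * (1 - t0*t1*t2*t3 * t ^ (2 * en n j - 1)))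
    else 1) *
  pairProd n t lam Jp Jm *
  ∏ j : Fin n, t0 ^ (-(eps n Jp Jm j)) * t ^ (-(en n j * eps n Jp Jm j))

/-- the coefficient `U_{K,m}(λ)` (four-parameter case). -/
def U4 (n : ℕ) (t t0 t1 t2 t3 : ℂ) (K : Finset (Fin n)) (m : ℕ) (lam : Fin n → ℤ) : ℂ :=
  (-1 : ℂ) ^ m *
  ∑ p ∈ (univ : Finset (Finset (Fin n) × Finset (Fin n))).filter
      (fun p => p.1 ⊆ K ∧ p.2 ⊆ K ∧ Disjoint p.1 p.2 ∧ p.1.card + p.2.card = m),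
    (∏ j ∈ p.1, if lam j = 0 then
        ((1 - t0 * t1 * tn n t j) * (1 - t0 * t2 * tn n t j) * (1 - t0 * t3 * tn n t j)) /
        (1 - t0*t1*t2*t3 * t ^ (2 * en n j)) else 1) *
    (∏ j ∈ p.1, if lam j = 1 then 1 - t0*t1*t2*t3 * t ^ (en n j) else 1) *
    (∏ j ∈ p.2, if lam j = 1 then
        ((1 - t1 * t2 * tn n t j) * (1 - t1 * t3 * tn n t j) * (1 - t2 * t3 * tn n t j)) /
        (1 - t0*t1*t2*t3 * t ^ (2 * en n j)) else 1) *
    (∏ j ∈ K, ∏ k ∈ K,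
        if j < k ∧ (eps n p.1 p.2 j + eps n p.1 p.2 k = -2 ∨ eps n p.1 p.2 j + eps n p.1 p.2 k = 1 ∨
              eps n p.1 p.2 j + eps n p.1 p.2 k = 2) ∧
           lam j = 1 ∧ lam k = (if eps n p.1 p.2 k = -1 then 1 else 0)
        then (1 - t0*t1*t2*t3 * t ^ (2 * (n : ℤ) + 1 - ((j : ℤ) + 1) - ((k : ℤ) + 1))) /
             (1 - t0*t1*t2*t3 * t ^ (2 * (n : ℤ) - ((j : ℤ) + 1) - ((k : ℤ) + 1))) else 1) *
    (∏ j ∈ p.1 ∪ p.2, ∏ k ∈ K \ p.2,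
        if j < k ∧ (eps n p.1 p.2 k - eps n p.1 p.2 j = 0 ∨ eps n p.1 p.2 k - eps n p.1 p.2 j = 1) ∧
           lam j = (if eps n p.1 p.2 j = -1 then 1 else 0) ∧ lam k = 0
        then (1 - t0*t1*t2*t3 * t ^ (2 * (n : ℤ) - 1 - ((j : ℤ) + 1) - ((k : ℤ) + 1))) /
             (1 - t0*t1*t2*t3 * t ^ (2 * (n : ℤ) - ((j : ℤ) + 1) - ((k : ℤ) + 1))) else 1) *
    (∏ j ∈ K, ∏ k ∈ K,
        if lam j = lam k ∧ eps n p.1 p.2 j > eps n p.1 p.2 k then rat n t j k else 1) *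
    (∏ j ∈ p.2, ∏ k ∈ p.1, if lam j = lam k + 1 then rat n t j k else 1) *
    (∏ j ∈ K, t0 ^ (-(eps n p.1 p.2 j))) *
    (∏ j ∈ K, ∏ k ∈ K,
        if j < k ∧ eps n p.1 p.2 j ≠ eps n p.1 p.2 k ∧ eps n p.1 p.2 k = 0
        then t ^ (-(eps n p.1 p.2 j)) else 1) *
    (∏ j ∈ K, ∏ k ∈ K,
        if j < k ∧ lam j = lam k ∧ eps n p.1 p.2 k - eps n p.1 p.2 j = 1 then t⁻¹ else 1)

/-- the coefficient `W_{J+,J-}(λ)` (four-parameter case). -/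
def W4 (n : ℕ) (t t0 t1 t2 t3 : ℂ) (lam : Fin n → ℤ) (Jp Jm : Finset (Fin n)) : ℂ :=
  (∏ j ∈ Jp, if lam j = 1 then 1 - t0*t1*t2*t3 * t ^ (en n j + (m0c n lam : ℤ)) else 1) *
  pairProd n t lam Jp Jm *
  ∏ j ∈ Jp, if lam j = 0 then
    ((1 - t0*t1*t2*t3 * t ^ (en n j - 1)) *
     (1 - t0*t1*t2*t3 * t ^ (en n j + (m0c n lam : ℤ) + (m1c n lam : ℤ) - (m1p n lam Jp : ℤ))) *
     ((1 - t0 * t1 * tn n t j) * (1 - t0 * t2 * tn n t j) * (1 - t0 * t3 * tn n t j) *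
      (1 - t1 * t2 * tn n t j) * (1 - t1 * t3 * tn n t j) * (1 - t2 * t3 * tn n t j))) /
    ((1 - t0*t1*t2*t3 * t ^ (2 * en n j - 1)) * (1 - t0*t1*t2*t3 * t ^ (2 * en n j)) ^ 2 *
     (1 - t0*t1*t2*t3 * t ^ (2 * en n j + 1)))
  else 1

/-- the difference operator `H_l` (four-parameter case). -/
def H4 (n : ℕ) (t t0 t1 t2 t3 : ℂ) (l : ℕ) (f : Lam n → ℂ) : Lam n → ℂ := fun lam =>
  ∑ p ∈ (univ : Finset (Finset (Fin n) × Finset (Fin n))).filter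
      (fun p => Disjoint p.1 p.2 ∧ p.1.card + p.2.card ≤ l),
    if h : IsPart n (shift n lam.1 p.1 p.2) then
      U4 n t t0 t1 t2 t3 (p.1ᶜ ∩ p.2ᶜ) (l - (p.1.card + p.2.card)) lam.1 *
      W4 n t t0 t1 t2 t3 lam.1 p.1 p.2 * f ⟨_, h⟩
    else 0

/-- the gauge function `h(λ)` (four-parameter case). -/
def h4 (n : ℕ) (t t0 t1 t2 t3 : ℂ) (lam : Fin n → ℤ) : ℂ :=
  ∏ j : Fin n,
    t0 ^ (lam j) * t ^ (en n j * lam j) *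
    (if lam j = 0 then 1 - t0*t1*t2*t3 * t ^ (en n j + (m0c n lam : ℤ) - 1) else 1) *
    (if lam j = 0 then 1 else
      (1 - t1 * t2 * tn n t j) * (1 - t1 * t3 * tn n t j) * (1 - t2 * t3 * tn n t j))

/-- the box `[0, 2π]^n`. -/
def box (n : ℕ) : Set (Fin n → ℝ) := Set.univ.pi fun _ => Set.Icc 0 (2 * Real.pi)


/-- the weighted measure `|Δ(ξ)|² dξ` on the box `[0,2π]^n`. -/
def wmeas (n : ℕ) (t t0 t1 t2 t3 : ℝ) : Measure (Fin n → ℝ) :=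
  ((volume : Measure (Fin n → ℝ)).restrict (box n)).withDensity
    fun xi => ENNReal.ofReal
      (‖Dlt n (t : ℂ) (t0 : ℂ) (t1 : ℂ) (t2 : ℂ) (t3 : ℂ)
        (fun j => (xi j : ℂ))‖ ^ 2)

/-- the normalization integral `∫_{[0,2π]^n} |P_λ(ξ) Δ(ξ)|² dξ`. -/
def nInt (n : ℕ) (t t0 t1 t2 t3 : ℝ) (lam : Fin n → ℤ) : ℝ :=
  ∫ xi in box n,
    ‖P n (t : ℂ) (t0 : ℂ) (t1 : ℂ) (t2 : ℂ) (t3 : ℂ) lam (fun j => (xi j : ℂ)) *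
      Dlt n (t : ℂ) (t0 : ℂ) (t1 : ℂ) (t2 : ℂ) (t3 : ℂ) (fun j => (xi j : ℂ))‖ ^ 2



/-!
Expand `P_λ` and `P_μ` over the hyperoctahedral group. For real parameters `conj P_μ = P_μ`, since
conjugation is the reflection `ξ ↦ -ξ`, and `|Δ(ξ)|² = Δ(ξ) Δ(-ξ)` is invariant under the group.
A change of variables therefore reduces the integral to those of
`C_λ(-ξ) e^{i⟨λ, ξ⟩} · C_μ(wξ) e^{-i⟨μ, wξ⟩} · Δ(ξ) Δ(-ξ)` with `w` a signed permutation.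

In this product the poles of the `C`-functions cancel. What remains of a root `α` is `1` or the
quotient `(t - e^{iα}) / (1 - t e^{iα})`, and a coordinate with `λ_j > 0` contributes
`e^{i(λ_j - μ_k)ξ_j}`, with `k` the index that `w` matches with `j`, times a power series in
`e^{iξ_j}`. As `λ` is dominant, on a line `ξ + λθ` the product is `z^m` times a holomorphic
function of `z = e^{iθ}` in the disc, where `m = ⟨λ, λ⟩ - ⟨λ, σμ⟩` for a permutation `σ`; the
coordinates with `λ_j = 0` are constant on the line. By symmetry assume `|μ|² ≤ |λ|²`; then
`2m ≥ 2|λ|² - 2⟨λ, μ⟩ ≥ |λ - μ|² > 0` by the rearrangement inequality. Hence the mean over every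
such line vanishes, and so does the integral over the torus.
-/

section SignedPermutations

variable {ι G M : Type*} [AddCommGroup G] [CommMonoid M]

/-- `x` with its sign flipped when `b` is `true`. -/
def negIf (b : Bool) (x : G) : G := if b then -x else x

/-- The action of a signed permutation on the coordinates of a point of `ι → G`; for `G = ℂ` it is
`act`. -/
def signedPerm (w : Equiv.Perm ι × (ι → Bool)) (x : ι → G) : ι → G :=
  fun j => negIf (w.2 j) (x (w.1 j))

lemma negIf_neg (b : Bool) (x : G) : negIf b (-x) = -negIf b x := by
  cases b <;> rfl

lemma negIf_add (b : Bool) (x y : G) : negIf b (x + y) = negIf b x + negIf b y := by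
  cases b <;> simp [negIf, add_comm]

lemma negIf_negIf (b c : Bool) (x : G) : negIf b (negIf c x) = negIf (b ^^ c) x := by
  cases b <;> cases c <;> simp [negIf]

lemma apply_negIf_of_even {X : Type*} {c : G → X} (hc : ∀ x, c (-x) = c x) (b : Bool) (x : G) :
    c (negIf b x) = c x := by
  cases b
  · rfl
  · exact hc x

lemma signedPerm_neg (w : Equiv.Perm ι × (ι → Bool)) (x : ι → G) :
    signedPerm w (-x) = -signedPerm w x :=
  funext fun _ => negIf_neg _ _

lemma signedPerm_compl (w : Equiv.Perm ι × (ι → Bool)) (x : ι → G) :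
    signedPerm (w.1, w.2ᶜ) x = -signedPerm w x := by
  ext j
  cases h : w.2 j <;> simp [signedPerm, negIf, h]

lemma exists_signedPerm_eq_comp (w w' : Equiv.Perm ι × (ι → Bool)) :
    ∃ v : Equiv.Perm ι × (ι → Bool),
      ∀ x : ι → G, signedPerm w' x = signedPerm v (signedPerm w x) := by
  refine ⟨(w'.1.trans w.1.symm, fun j => w'.2 j ^^ w.2 (w.1.symm (w'.1 j))), fun x => ?_⟩
  ext j
  simp [signedPerm, negIf_negIf]

lemma prod_comp_signedPerm [Fintype ι] (g : ι → G → M) (w : Equiv.Perm ι × (ι → Bool)) (x : ι → G) :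
    ∏ j, g j (signedPerm w x j) =
      ∏ j, g (w.1.symm j) (negIf (w.2 (w.1.symm j)) (x j)) := by
  rw [← Equiv.prod_comp w.1.symm]
  simp [signedPerm]

variable [Fintype ι] [LinearOrder ι]

/-- The product of `c` over the values at `x` of the positive roots `e j - e k`, `e j + e k`
(`j < k`) of type `D`. -/
def rootProd (c : G → M) (x : ι → G) : M :=
  ∏ p : ι × ι with p.1 < p.2, c (x p.1 - x p.2) * c (x p.1 + x p.2)

lemma rootProd_neg (c : G → M) (x : ι → G) :
    rootProd c (-x) = rootProd (fun θ => c (-θ)) x := by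
  simp [rootProd, sub_eq_add_neg, add_comm]

lemma prod_lt_eq_prod_lt_perm (σ : Equiv.Perm ι) (f : ι → ι → M) :
    ∏ p : ι × ι with p.1 < p.2, f p.1 p.2 =
      ∏ p : ι × ι with p.1 < p.2,
        if σ p.1 < σ p.2 then f (σ p.1) (σ p.2) else f (σ p.2) (σ p.1) := by
  let sortBy (τ : Equiv.Perm ι) (p : ι × ι) : ι × ι :=
    if τ p.1 < τ p.2 then (τ p.1, τ p.2) else (τ p.2, τ p.1)
  have sortBy_lt (τ : Equiv.Perm ι) (p : ι × ι) (hp : p.1 < p.2) :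
      (sortBy τ p).1 < (sortBy τ p).2 := by
    have hne : τ p.1 ≠ τ p.2 := τ.injective.ne hp.ne
    grind
  have sortBy_symm (τ : Equiv.Perm ι) (p : ι × ι) (hp : p.1 < p.2) :
      sortBy τ.symm (sortBy τ p) = p := by
    ext <;> grind [Equiv.symm_apply_apply]
  refine (prod_nbij' (sortBy σ) (sortBy σ.symm) ?_ ?_ ?_ ?_ ?_).symm
  · simpa using fun j k => sortBy_lt σ (j, k)
  · simpa using fun j k => sortBy_lt σ.symm (j, k)
  · simpa using fun j k => sortBy_symm σ (j, k)
  · simpa using fun j k => sortBy_symm σ.symm (j, k)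
  · rintro ⟨j, k⟩ -
    dsimp only [sortBy]
    split_ifs <;> rfl

lemma exists_negIf_sub_mul_negIf_add (r s o : Bool) :
    ∃ a b : Bool, ∀ (c : G → M) (x y : G),
      (if o then c (negIf r x - negIf s y) * c (negIf r x + negIf s y)
        else c (negIf s y - negIf r x) * c (negIf s y + negIf r x)) =
      c (negIf a (x - y)) * c (negIf b (x + y)) := by
  refine ⟨if o then r else !s, if o then r else s, fun c x y => ?_⟩
  cases o <;> cases r <;> cases s <;>
    simp [negIf, add_comm, mul_comm, sub_eq_add_neg]

lemma exists_rootProd_signedPerm (w : Equiv.Perm ι × (ι → Bool)) :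
    ∃ a b : ι × ι → Bool, ∀ (c : G → M) (x : ι → G),
      rootProd c (signedPerm w x) =
        ∏ p : ι × ι with p.1 < p.2,
          c (negIf (a p) (x p.1 - x p.2)) * c (negIf (b p) (x p.1 + x p.2)) := by
  let τ := w.1.symm
  choose a b hab using fun p : ι × ι =>
    exists_negIf_sub_mul_negIf_add (G := G) (M := M) (w.2 (τ p.1)) (w.2 (τ p.2)) (τ p.1 < τ p.2)
  refine ⟨a, b, fun c x => ?_⟩
  rw [rootProd, prod_lt_eq_prod_lt_perm τ fun j k =>
    c (signedPerm w x j - signedPerm w x k) * c (signedPerm w x j + signedPerm w x k)]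
  refine prod_congr rfl fun p _ => ?_
  simp [← hab, signedPerm, τ]

lemma rootProd_signedPerm_of_even {c : G → M} (hc : ∀ x, c (-x) = c x)
    (w : Equiv.Perm ι × (ι → Bool)) (x : ι → G) :
    rootProd c (signedPerm w x) = rootProd c x := by
  obtain ⟨a, b, hab⟩ := exists_rootProd_signedPerm (G := G) (M := M) w
  rw [hab]
  simp only [apply_negIf_of_even hc, rootProd]

end SignedPermutations

section Circle

/-- The circle `ℝ / 2πℤ`, in which the coordinates `ξ j` take their values. -/
abbrev Angle : Type := AddCircle (2 * Real.pi)

instance : Fact (0 < 2 * Real.pi) := ⟨Real.two_pi_pos⟩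

/-- The standard character `θ ↦ exp (i θ)`. -/
def cis (θ : Angle) : ℂ := AddCircle.toCircle θ

lemma cis_coe (x : ℝ) : cis x = exp (I * x) := by
  simp [cis, AddCircle.toCircle_apply_mk, mul_comm I, Circle.coe_exp]

lemma cis_add (θ φ : Angle) : cis (θ + φ) = cis θ * cis φ := by
  simp [cis, AddCircle.toCircle_add]

lemma cis_neg (θ : Angle) : cis (-θ) = (cis θ)⁻¹ := by
  simp [cis, AddCircle.toCircle_neg]

lemma cis_nsmul (k : ℕ) (θ : Angle) : cis (k • θ) = cis θ ^ k := by
  simp [cis, AddCircle.toCircle_nsmul]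

lemma norm_cis (θ : Angle) : ‖cis θ‖ = 1 :=
  Circle.norm_coe _

lemma cis_ne_zero (θ : Angle) : cis θ ≠ 0 :=
  Circle.coe_ne_zero _

lemma cis_eq_one_iff {θ : Angle} : cis θ = 1 ↔ θ = 0 := by
  rw [cis, Circle.coe_eq_one, ← AddCircle.toCircle_zero,
    (AddCircle.injective_toCircle Real.two_pi_pos.ne').eq_iff]

lemma conj_cis (θ : Angle) : starRingEnd ℂ (cis θ) = cis (-θ) := by
  rw [cis_neg, Complex.inv_eq_conj (norm_cis θ)]

lemma cis_mem_closedBall (θ : Angle) : cis θ ∈ Metric.closedBall (0 : ℂ) 1 := by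
  simp [norm_cis]

@[fun_prop]
lemma continuous_cis : Continuous cis :=
  continuous_subtype_val.comp AddCircle.continuous_toCircle

end Circle

section HardyOrder

/-- `G` is the boundary value of `z ^ m * H z` with `H` holomorphic on the closed unit disc. In
particular the Fourier coefficients of `G` of index less than `m` vanish. -/
def HasHardyOrder (m : ℤ) (G : Angle → ℂ) : Prop :=
  ∃ H : ℂ → ℂ, DifferentiableOn ℂ H (Metric.closedBall 0 1) ∧ ∀ θ, G θ = cis θ ^ m * H (cis θ)

namespace HasHardyOrder

variable {m m' : ℤ} {G G' : Angle → ℂ}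

lemma const (c : ℂ) : HasHardyOrder 0 fun _ => c :=
  ⟨fun _ => c, differentiableOn_const c, by simp⟩

lemma cis_zpow (m : ℤ) : HasHardyOrder m fun θ => cis θ ^ m :=
  ⟨fun _ => 1, differentiableOn_const 1, by simp⟩

lemma mul (hG : HasHardyOrder m G) (hG' : HasHardyOrder m' G') :
    HasHardyOrder (m + m') fun θ => G θ * G' θ := by
  obtain ⟨H, hH, hGH⟩ := hG
  obtain ⟨H', hH', hGH'⟩ := hG'
  refine ⟨fun z => H z * H' z, hH.mul hH', fun θ => ?_⟩
  simp only [hGH, hGH', zpow_add₀ (cis_ne_zero θ)]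
  ring

lemma prod {κ : Type*} (s : Finset κ) {m : κ → ℤ} {G : κ → Angle → ℂ}
    (h : ∀ i ∈ s, HasHardyOrder (m i) (G i)) :
    HasHardyOrder (∑ i ∈ s, m i) fun θ => ∏ i ∈ s, G i θ := by
  induction s using Finset.cons_induction with
  | empty => simpa using const 1
  | cons i s hi ih =>
    simp only [Finset.sum_cons, Finset.prod_cons]
    exact (h i (by simp)).mul (ih fun j hj => h j (by simp [hj]))

lemma mono (hG : HasHardyOrder m G) (hm : m' ≤ m) : HasHardyOrder m' G := by
  obtain ⟨H, hH, hGH⟩ := hG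
  obtain ⟨k, rfl⟩ := Int.le.dest hm
  refine ⟨fun z => z ^ k * H z, (differentiableOn_id.pow k).mul hH, fun θ => ?_⟩
  rw [hGH, zpow_add₀ (cis_ne_zero θ), zpow_natCast, mul_assoc]

lemma comp_add_nsmul (hG : HasHardyOrder m G) (r : Angle) (k : ℕ) :
    HasHardyOrder (k * m) fun θ => G (r + k • θ) := by
  obtain ⟨H, hH, hGH⟩ := hG
  have mapsTo : Set.MapsTo (fun z : ℂ => cis r * z ^ k) (Metric.closedBall 0 1)
      (Metric.closedBall 0 1) := fun z hz => by
    simpa [norm_cis] using pow_le_one₀ (norm_nonneg z) (by simpa using hz)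
  refine ⟨fun z => cis r ^ m * H (cis r * z ^ k), ?_, fun θ => ?_⟩
  · exact (hH.comp (by fun_prop) mapsTo).const_mul _
  · simp only [hGH, cis_add, cis_nsmul, mul_zpow, zpow_mul, zpow_natCast]
    ring

lemma continuous (hG : HasHardyOrder m G) : Continuous G := by
  obtain ⟨H, hH, hGH⟩ := hG
  rw [funext hGH]
  exact (continuous_cis.zpow₀ m fun θ => .inl (cis_ne_zero θ)).mul
    (hH.continuousOn.comp_continuous continuous_cis cis_mem_closedBall)

lemma integral_eq_zero (hG : HasHardyOrder m G) (hm : 1 ≤ m) : ∫ θ, G θ = 0 := by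
  obtain ⟨H, hH, hGH⟩ := hG.mono hm
  have diffContOnCl : DiffContOnCl ℂ (fun z => z * H z) (Metric.ball 0 |(1 : ℝ)|) := by
    refine DifferentiableOn.diffContOnCl ?_
    rw [abs_one, closure_ball _ one_ne_zero]
    exact differentiableOn_id.mul hH
  have average_eq_zero : Real.circleAverage (fun z => z * H z) 0 1 = 0 := by
    simpa using diffContOnCl.circleAverage
  rw [← AddCircle.intervalIntegral_preimage _ 0, zero_add]
  calc ∫ x in (0)..2 * Real.pi, G x
      = ∫ x in (0)..2 * Real.pi, circleMap 0 1 x * H (circleMap 0 1 x) := by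
        simp [hGH, cis_coe, circleMap, mul_comm I]
    _ = 0 := by
        simpa [Real.circleAverage_def, Real.pi_ne_zero] using average_eq_zero

end HasHardyOrder

lemma one_sub_mul_ne_zero {a z : ℂ} (ha : ‖a‖ < 1) (hz : ‖z‖ ≤ 1) : 1 - a * z ≠ 0 := by
  refine sub_ne_zero.2 fun h => ?_
  have : ‖a * z‖ < 1 := by
    rw [norm_mul]
    exact mul_lt_one_of_nonneg_of_lt_one_left (norm_nonneg a) ha hz
  simp [← h] at this

end HardyOrder

section Torus

lemma integral_comp_eq_of_measurePreserving {α β E : Type*} [MeasurableSpace α]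
    [MeasurableSpace β] [NormedAddCommGroup E] [NormedSpace ℝ E] {μ : Measure α} {ν : Measure β}
    {f : α → β} (hf : MeasurePreserving f μ ν) {g : β → E} (hg : AEStronglyMeasurable g ν) :
    ∫ x, g (f x) ∂μ = ∫ y, g y ∂ν := by
  rw [← hf.map_eq] at hg ⊢
  exact (integral_map hf.aemeasurable hg).symm

lemma integral_eq_zero_of_forall_integral_add_eq_zero {X Y E : Type*}
    [AddGroup X] [TopologicalSpace X] [ContinuousAdd X] [CompactSpace X]
    [SecondCountableTopology X] [MeasurableSpace X] [BorelSpace X]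
    [TopologicalSpace Y] [CompactSpace Y] [SecondCountableTopology Y]
    [MeasurableSpace Y] [BorelSpace Y] [NormedAddCommGroup E] [NormedSpace ℝ E] [CompleteSpace E]
    (μ : Measure X) [IsFiniteMeasure μ] [μ.IsAddRightInvariant]
    (ν : Measure Y) [IsFiniteMeasure ν] [NeZero ν]
    {F : X → E} (hF : Continuous F) {φ : Y → X} (hφ : Continuous φ)
    (h : ∀ x, ∫ y, F (x + φ y) ∂ν = 0) : ∫ x, F x ∂μ = 0 := by
  have integrable : Integrable (Function.uncurry fun y x => F (x + φ y)) (ν.prod μ) :=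
    Continuous.integrable_of_hasCompactSupport (by fun_prop) (.of_compactSpace _)
  have swap := integral_integral_swap integrable
  simpa [integral_add_right_eq_self, h, measureReal_def, ENNReal.toReal_eq_zero_iff,
    NeZero.ne ν] using swap

lemma ae_apply_ne_zero {X Y : Type*}
    [AddGroup X] [TopologicalSpace X] [ContinuousAdd X] [MeasurableSpace X] [BorelSpace X]
    [AddGroup Y] [TopologicalSpace Y] [IsTopologicalAddGroup Y] [T1Space Y]
    [WeaklyLocallyCompactSpace Y] [ConnectedSpace Y] [Nontrivial Y]
    [MeasurableSpace Y] [BorelSpace Y]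
    (μ : Measure X) [IsFiniteMeasure μ] [μ.IsAddHaarMeasure]
    (χ : X →+ Y) (hχ : Continuous χ) (hsurj : Function.Surjective χ) :
    ∀ᵐ x ∂μ, χ x ≠ 0 := by
  have : (μ.map χ).IsAddHaarMeasure :=
    Measure.isAddHaarMeasure_map_of_isFiniteMeasure μ χ hχ hsurj
  exact ae_of_ae_map hχ.aemeasurable (Measure.ae_ne (μ.map χ) 0)

variable {ι : Type*}

lemma measurePreserving_signedPerm [Fintype ι] (w : Equiv.Perm ι × (ι → Bool)) :
    MeasurePreserving (signedPerm (G := Angle) w) := by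
  let hom : (ι → Angle) →+ (ι → Angle) :=
    AddMonoidHom.mk' (signedPerm w) fun x y => funext fun j => negIf_add _ _ _
  have continuous_hom : Continuous hom := by
    refine continuous_pi fun j => ?_
    change Continuous fun x : ι → Angle => negIf (w.2 j) (x (w.1 j))
    unfold negIf
    split_ifs <;> fun_prop
  have surjective_hom : Function.Surjective hom := fun y =>
    ⟨fun j => negIf (w.2 (w.1.symm j)) (y (w.1.symm j)), by
      ext j; cases h : w.2 j <;> simp [hom, signedPerm, negIf, h]⟩
  exact AddMonoidHom.measurePreserving continuous_hom surjective_hom rfl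

/-- No root of type `C` vanishes at `x`. -/
def IsRegular [LT ι] (x : ι → Angle) : Prop :=
  (∀ j, 2 • x j ≠ 0) ∧ ∀ j k, j < k → x j - x k ≠ 0 ∧ x j + x k ≠ 0

instance : Nontrivial Angle :=
  ⟨(Real.pi : ℝ), 0, fun h => by
    have : exp (I * Real.pi) = 1 := by rw [← cis_coe, h, cis_eq_one_iff]
    norm_num [mul_comm I, exp_pi_mul_I] at this⟩

lemma ae_isRegular [Fintype ι] [Preorder ι] : ∀ᵐ x : ι → Angle, IsRegular x := by
  classical
  let proj (j : ι) : (ι → Angle) →+ Angle := Pi.evalAddMonoidHom (fun _ => Angle) j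
  have continuous_proj (j : ι) : Continuous (proj j) := continuous_apply j
  have half_add_half (θ : Angle) : ∃ φ, 2 • φ = θ := by
    obtain ⟨r, rfl⟩ := QuotientAddGroup.mk_surjective θ
    exact ⟨(r / 2 : ℝ), by simp [← AddCircle.coe_nsmul, mul_div_cancel₀]⟩
  simp only [IsRegular, Filter.eventually_and, ae_all_iff]
  refine ⟨fun j => ?_, fun j k hjk => ⟨?_, ?_⟩⟩
  · refine ae_apply_ne_zero volume (2 • proj j) ((continuous_proj j).const_smul 2) fun θ => ?_
    obtain ⟨φ, hφ⟩ := half_add_half θ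
    exact ⟨Pi.single j φ, by simpa [proj] using hφ⟩
  · refine ae_apply_ne_zero volume (proj j - proj k)
      ((continuous_proj j).sub (continuous_proj k)) fun θ => ⟨Pi.single j θ, ?_⟩
    simp [proj, hjk.ne']
  · refine ae_apply_ne_zero volume (proj j + proj k)
      ((continuous_proj j).add (continuous_proj k)) fun θ => ⟨Pi.single j θ, ?_⟩
    simp [proj, hjk.ne']

/-- `F` is continuous on the torus and, along each line in direction `v`, has Hardy order `m`. -/
structure HasHardyOrderAlong (v : ι → ℕ) (m : ℤ) (F : (ι → Angle) → ℂ) : Prop where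
  continuous : Continuous F
  hasHardyOrder : ∀ x, HasHardyOrder m fun θ => F (x + fun j => v j • θ)

namespace HasHardyOrderAlong

variable {v : ι → ℕ} {m m' : ℤ} {F F' : (ι → Angle) → ℂ}

lemma mul (hF : HasHardyOrderAlong v m F) (hF' : HasHardyOrderAlong v m' F') :
    HasHardyOrderAlong v (m + m') fun x => F x * F' x where
  continuous := hF.continuous.mul hF'.continuous
  hasHardyOrder x := (hF.hasHardyOrder x).mul (hF'.hasHardyOrder x)

lemma prod {κ : Type*} (s : Finset κ) {m : κ → ℤ} {F : κ → (ι → Angle) → ℂ}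
    (h : ∀ i ∈ s, HasHardyOrderAlong v (m i) (F i)) :
    HasHardyOrderAlong v (∑ i ∈ s, m i) fun x => ∏ i ∈ s, F i x where
  continuous := continuous_finsetProd s fun i hi => (h i hi).continuous
  hasHardyOrder x := .prod s fun i hi => (h i hi).hasHardyOrder x

lemma comp {G : Angle → ℂ} (hG : HasHardyOrder m G) {χ : (ι → Angle) → Angle}
    (hχ : Continuous χ) {k : ℕ} (hk : ∀ x θ, χ (x + fun j => v j • θ) = χ x + k • θ) :
    HasHardyOrderAlong v (k * m) fun x => G (χ x) where
  continuous := hG.continuous.comp hχ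
  hasHardyOrder x := by simpa only [hk] using hG.comp_add_nsmul (χ x) k

lemma comp_eval_of_eq_zero {G : Angle → ℂ} (hG : Continuous G) {j : ι} (hj : v j = 0) :
    HasHardyOrderAlong v 0 fun x => G (x j) where
  continuous := by fun_prop
  hasHardyOrder x := by simpa [hj] using HasHardyOrder.const (G (x j))

lemma integral_eq_zero [Fintype ι] (hF : HasHardyOrderAlong v m F) (hm : 1 ≤ m) :
    ∫ x, F x = 0 :=
  integral_eq_zero_of_forall_integral_add_eq_zero volume (volume : Measure Angle) hF.continuous
    (φ := fun θ j => v j • θ) (by fun_prop) fun x => (hF.hasHardyOrder x).integral_eq_zero hm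

end HasHardyOrderAlong

end Torus

section Rearrangement

variable {ι : Type*} [Fintype ι] [LinearOrder ι]

lemma one_le_sum_mul_sub_comp_perm {l m : ι → ℕ} (hl : Antitone l) (hm : Antitone m) (hne : l ≠ m)
    (hle : ∑ j, m j * m j ≤ ∑ j, l j * l j) (σ : Equiv.Perm ι) :
    1 ≤ ∑ j, l j * (l j - m (σ j) : ℤ) := by
  have rearrangement : ∑ j, l j * m (σ j) ≤ ∑ j, l j * m j :=
    (hl.monovary hm).sum_mul_comp_perm_le_sum_mul
  have sum_sq_pos : 0 < ∑ j, (l j - m j : ℤ) ^ 2 := by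
    obtain ⟨j, hj⟩ := Function.ne_iff.1 hne
    exact sum_pos' (fun i _ => sq_nonneg _) ⟨j, mem_univ j, by
      have : (l j - m j : ℤ) ≠ 0 := sub_ne_zero.2 (mod_cast hj)
      positivity⟩
  have expand : ∑ j, (l j - m j : ℤ) ^ 2 =
      ∑ j, (l j * l j : ℤ) + ∑ j, (m j * m j : ℤ) - 2 * ∑ j, (l j * m j : ℤ) := by
    rw [mul_sum, ← sum_add_distrib, ← sum_sub_distrib]
    exact sum_congr rfl fun j _ => by ring
  simp only [mul_sub, sum_sub_distrib]
  zify at hle rearrangement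
  linarith

end Rearrangement

section HallLittlewood

variable {ι : Type*} (t : ℂ) (a : Fin 4 → ℂ)

/-- The contribution of a root with value `θ` to `C_λ`. -/
def rootFactor (θ : Angle) : ℂ := (1 - t * cis θ) / (1 - cis θ)

/-- The polynomial `∏ r, (1 - t_r z)`. -/
def endPoly (z : ℂ) : ℂ := ∏ r, (1 - a r * z)

/-- The contribution of a coordinate `θ` with positive part to `C_λ`. -/
def endFactor (θ : Angle) : ℂ := endPoly a (cis θ) / (1 - cis θ ^ 2)

/-- The contribution of a coordinate `θ` with part `m` to `C_λ(x) exp (-i ⟨λ, x⟩)`. -/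
def endTerm (m : ℕ) (θ : Angle) : ℂ :=
  (if 0 < m then endFactor a θ else 1) * (cis θ ^ m)⁻¹

variable {t a}

lemma endTerm_zero (θ : Angle) : endTerm a 0 θ = 1 := by
  simp [endTerm]

lemma endTerm_of_pos {m : ℕ} (hm : 0 < m) (θ : Angle) :
    endTerm a m θ = endFactor a θ * (cis θ ^ m)⁻¹ := by
  rw [endTerm, if_pos hm]

lemma reciprocal_endPoly {z : ℂ} (hz : z ≠ 0) : z ^ 4 * endPoly a z⁻¹ = ∏ r, (z - a r) := by
  simp only [endPoly, Fin.prod_univ_four]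
  field_simp

lemma endPoly_ne_zero (ha : ∀ r, ‖a r‖ < 1) {z : ℂ} (hz : ‖z‖ ≤ 1) : endPoly a z ≠ 0 :=
  prod_ne_zero_iff.2 fun r _ => one_sub_mul_ne_zero (ha r) hz

lemma one_sub_cis_ne_zero {θ : Angle} (hθ : θ ≠ 0) : 1 - cis θ ≠ 0 :=
  sub_ne_zero.2 (Ne.symm (mt cis_eq_one_iff.1 hθ))

lemma one_sub_cis_sq_ne_zero {θ : Angle} (hθ : 2 • θ ≠ 0) : 1 - cis θ ^ 2 ≠ 0 := by
  rw [← cis_nsmul]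
  exact one_sub_cis_ne_zero hθ

lemma rootFactor_ne_zero (ht : ‖t‖ < 1) {θ : Angle} (hθ : θ ≠ 0) : rootFactor t θ ≠ 0 :=
  div_ne_zero (one_sub_mul_ne_zero ht (norm_cis θ).le) (one_sub_cis_ne_zero hθ)

lemma endFactor_ne_zero (ha : ∀ r, ‖a r‖ < 1) {θ : Angle} (hθ : 2 • θ ≠ 0) :
    endFactor a θ ≠ 0 :=
  div_ne_zero (endPoly_ne_zero ha (norm_cis θ).le) (one_sub_cis_sq_ne_zero hθ)

lemma rootFactor_neg_div_rootFactor (ht : ‖t‖ < 1) {θ : Angle} (hθ : θ ≠ 0) :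
    rootFactor t (-θ) / rootFactor t θ = (t - cis θ) / (1 - t * cis θ) := by
  have one_sub_cis_ne := one_sub_cis_ne_zero hθ
  have one_sub_ne : 1 - t * cis θ ≠ 0 := one_sub_mul_ne_zero ht (norm_cis θ).le
  have cis_ne := cis_ne_zero θ
  rw [rootFactor, rootFactor, cis_neg]
  grind

lemma endFactor_neg_div_endFactor (ha : ∀ r, ‖a r‖ < 1) {θ : Angle} (hθ : 2 • θ ≠ 0) :
    endFactor a (-θ) / endFactor a θ =
      cis θ ^ (-2 : ℤ) * -((∏ r, (cis θ - a r)) / endPoly a (cis θ)) := by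
  have one_sub_cis_sq_ne := one_sub_cis_sq_ne_zero hθ
  have endPoly_ne := endPoly_ne_zero ha (norm_cis θ).le
  have cis_ne := cis_ne_zero θ
  rw [← reciprocal_endPoly cis_ne, endFactor, endFactor, cis_neg, zpow_neg, zpow_ofNat]
  grind

lemma differentiable_endPoly (a : Fin 4 → ℂ) : Differentiable ℂ (endPoly a) := by
  unfold endPoly
  fun_prop

lemma exists_hasHardyOrder_rootFactor (ht : ‖t‖ < 1) (b : Bool) :
    ∃ K : Angle → ℂ, HasHardyOrder 0 K ∧
      ∀ θ, θ ≠ 0 → rootFactor t (negIf b θ) / rootFactor t θ = K θ := by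
  cases b
  · exact ⟨fun _ => 1, .const 1, fun θ hθ => div_self (rootFactor_ne_zero ht hθ)⟩
  · refine ⟨fun θ => (t - cis θ) / (1 - t * cis θ),
      ⟨fun z => (t - z) / (1 - t * z), ?_, by simp⟩, fun θ => rootFactor_neg_div_rootFactor ht⟩
    exact DifferentiableOn.div (by fun_prop) (by fun_prop)
      fun z hz => one_sub_mul_ne_zero ht (by simpa using hz)

lemma hasHardyOrder_inv_endFactor (ha : ∀ r, ‖a r‖ < 1) :
    HasHardyOrder 0 fun θ => (endFactor a θ)⁻¹ := by
  refine ⟨fun z => (1 - z ^ 2) / endPoly a z, ?_, by simp [endFactor]⟩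
  exact DifferentiableOn.div (by fun_prop) (differentiable_endPoly a).differentiableOn
    fun z hz => endPoly_ne_zero ha (by simpa using hz)

lemma exists_hasHardyOrder_endTerm (ha : ∀ r, ‖a r‖ < 1) (m : ℕ) (b : Bool) :
    ∃ N : Angle → ℂ, HasHardyOrder (-m) N ∧
      ∀ θ, 2 • θ ≠ 0 → endTerm a m (negIf b θ) / endFactor a θ = N θ := by
  rcases m.eq_zero_or_pos with rfl | hm
  · exact ⟨_, hasHardyOrder_inv_endFactor ha, fun θ _ => by simp [endTerm_zero]⟩
  cases b
  · refine ⟨_, .cis_zpow (-m), fun θ hθ => ?_⟩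
    simp [endTerm_of_pos hm, negIf, endFactor_ne_zero ha hθ]
  · have reflection : HasHardyOrder (-2) fun θ =>
        cis θ ^ (-2 : ℤ) * -((∏ r, (cis θ - a r)) / endPoly a (cis θ)) := by
      refine ⟨fun z => -((∏ r, (z - a r)) / endPoly a z), ?_, fun _ => rfl⟩
      refine (DifferentiableOn.div ?_ (differentiable_endPoly a).differentiableOn
        fun z hz => endPoly_ne_zero ha (by simpa using hz)).neg
      fun_prop
    refine ⟨_, ((HasHardyOrder.cis_zpow m).mul reflection).mono (by omega), fun θ hθ => ?_⟩
    simp only [← endFactor_neg_div_endFactor ha hθ, endTerm_of_pos hm, negIf, if_true, cis_neg,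
      inv_pow, inv_inv, zpow_natCast]
    ring

lemma exists_hasHardyOrder_endTerm_mul (ha : ∀ r, ‖a r‖ < 1) (l m : ℕ) (b : Bool) :
    ∃ N : Angle → ℂ, Continuous N ∧ (0 < l → HasHardyOrder (l - m) N) ∧ ∀ θ, 2 • θ ≠ 0 →
      endTerm a l (-θ) * endTerm a m (negIf b θ) * (endFactor a θ * endFactor a (-θ))⁻¹ = N θ := by
  obtain ⟨N, hN, hN_eq⟩ := exists_hasHardyOrder_endTerm ha m b
  rcases l.eq_zero_or_pos with rfl | hl
  · have continuous_inv := (hasHardyOrder_inv_endFactor ha).continuous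
    refine ⟨fun θ => N θ * (endFactor a (-θ))⁻¹,
      hN.continuous.mul (continuous_inv.comp continuous_neg), by simp, fun θ hθ => ?_⟩
    simp only [← hN_eq θ hθ, endTerm_zero]
    ring
  · have hasOrder := (HasHardyOrder.cis_zpow l).mul hN
    refine ⟨_, hasOrder.continuous, fun _ => hasOrder, fun θ hθ => ?_⟩
    have endFactor_ne : endFactor a (-θ) ≠ 0 := endFactor_ne_zero ha (by simpa using hθ)
    simp only [← hN_eq θ hθ, endTerm_of_pos hl, cis_neg, inv_pow, inv_inv, zpow_natCast]
    field_simp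

variable [Fintype ι] [LinearOrder ι]

lemma exists_hasHardyOrderAlong_rootProd (ht : ‖t‖ < 1) {v : ι → ℕ} (hv : Antitone v)
    (w : Equiv.Perm ι × (ι → Bool)) :
    ∃ F, HasHardyOrderAlong v 0 F ∧ ∀ x : ι → Angle, IsRegular x →
      rootProd (rootFactor t) (-x) * rootProd (rootFactor t) (signedPerm w x) *
        rootProd (fun θ => (rootFactor t θ * rootFactor t (-θ))⁻¹) x = F x := by
  obtain ⟨b, b', rootProd_eq⟩ := exists_rootProd_signedPerm (G := Angle) (M := ℂ) w
  choose K hK K_eq using exists_hasHardyOrder_rootFactor ht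
  have cancel (s : Bool) (θ : Angle) (hθ : θ ≠ 0) :
      rootFactor t (-θ) * rootFactor t (negIf s θ) * (rootFactor t θ * rootFactor t (-θ))⁻¹ =
        K s θ := by
    have := rootFactor_ne_zero ht (neg_ne_zero.2 hθ)
    rw [← K_eq s θ hθ]
    field_simp
  refine ⟨fun x => ∏ p : ι × ι with p.1 < p.2,
    K (b p) (x p.1 - x p.2) * K (b' p) (x p.1 + x p.2), ?_, fun x hx => ?_⟩
  · rw [← sum_const_zero (s := univ.filter fun p : ι × ι => p.1 < p.2)]
    refine .prod _ fun p hp => ?_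
    have v_le : v p.2 ≤ v p.1 := hv (mem_filter.1 hp).2.le
    have sub_order := HasHardyOrderAlong.comp (v := v) (hK (b p))
      (χ := fun x => x p.1 - x p.2) (by fun_prop) (k := v p.1 - v p.2) fun x θ => by
        simp only [Pi.add_apply, sub_nsmul θ v_le]
        abel
    have add_order := HasHardyOrderAlong.comp (v := v) (hK (b' p))
      (χ := fun x => x p.1 + x p.2) (by fun_prop) (k := v p.1 + v p.2) fun x θ => by
        simp only [Pi.add_apply, add_nsmul]
        abel
    simpa using sub_order.mul add_order
  · rw [rootProd_neg, rootProd_eq, rootProd, rootProd, ← prod_mul_distrib, ← prod_mul_distrib]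
    refine prod_congr rfl fun p hp => ?_
    obtain ⟨sub_ne, add_ne⟩ := hx.2 _ _ (mem_filter.1 hp).2
    rw [← cancel _ _ sub_ne, ← cancel _ _ add_ne]
    ring

lemma exists_hasHardyOrderAlong_prod_endTerm (ha : ∀ r, ‖a r‖ < 1) (l m : ι → ℕ)
    (w : Equiv.Perm ι × (ι → Bool)) :
    ∃ F, HasHardyOrderAlong l (∑ j, l j * (l j - m (w.1.symm j) : ℤ)) F ∧
      ∀ x : ι → Angle, IsRegular x →
        (∏ j, endTerm a (l j) (-x j)) * (∏ j, endTerm a (m j) (signedPerm w x j)) *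
          ∏ j, (endFactor a (x j) * endFactor a (-x j))⁻¹ = F x := by
  choose N continuous_N order_N N_eq using fun j => exists_hasHardyOrder_endTerm_mul ha (l j)
    (m (w.1.symm j)) (w.2 (w.1.symm j))
  refine ⟨fun x => ∏ j, N j (x j), .prod _ fun j _ => ?_, fun x hx => ?_⟩
  · rcases (l j).eq_zero_or_pos with hj | hj
    · simpa [hj] using HasHardyOrderAlong.comp_eval_of_eq_zero (continuous_N j) hj
    · exact .comp (order_N j hj) (continuous_apply j) fun _ _ => rfl
  · rw [prod_comp_signedPerm (fun j => endTerm a (m j)), ← prod_mul_distrib, ← prod_mul_distrib]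
    exact prod_congr rfl fun j _ => N_eq j (x j) (hx.1 j)

variable (t a)

/-- The summand `C_λ(x) exp (-i ⟨λ, x⟩)` of the Hall–Littlewood function, for the partition `l`. -/
def waveTerm (l : ι → ℕ) (x : ι → Angle) : ℂ :=
  rootProd (rootFactor t) x * ∏ j, endTerm a (l j) (x j)

/-- The sum of `waveTerm` over the hyperoctahedral group, i.e. `P_λ / c_λ`. -/
def waveSum (l : ι → ℕ) (x : ι → Angle) : ℂ :=
  ∑ w : Equiv.Perm ι × (ι → Bool), waveTerm t a l (signedPerm w x)

/-- The weight `Δ(x) Δ(-x)`. -/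
def weight (x : ι → Angle) : ℂ :=
  rootProd (fun θ => (rootFactor t θ * rootFactor t (-θ))⁻¹) x *
    ∏ j, (endFactor a (x j) * endFactor a (-x j))⁻¹

/-- The contribution to `P_λ(-x) P_μ(x) Δ(x) Δ(-x)` of the identity and of `w`. -/
def crossTerm (l m : ι → ℕ) (w : Equiv.Perm ι × (ι → Bool)) (x : ι → Angle) : ℂ :=
  waveTerm t a l (-x) * waveTerm t a m (signedPerm w x) * weight t a x

variable {t a}

lemma waveSum_neg (l : ι → ℕ) (x : ι → Angle) : waveSum t a l (-x) = waveSum t a l x := by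
  let flip : Equiv.Perm ι × (ι → Bool) ≃ Equiv.Perm ι × (ι → Bool) :=
    (Equiv.refl _).prodCongr (compl_involutive (α := ι → Bool)).toPerm
  refine Fintype.sum_equiv flip _ _ fun w => ?_
  rw [signedPerm_neg, ← signedPerm_compl]
  rfl

lemma weight_signedPerm (w : Equiv.Perm ι × (ι → Bool)) (x : ι → Angle) :
    weight t a (signedPerm w x) = weight t a x := by
  have even_mul_neg (c : Angle → ℂ) (θ : Angle) :
      (c (-θ) * c (- -θ))⁻¹ = (c θ * c (-θ))⁻¹ := by
    rw [neg_neg, mul_comm]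
  rw [weight, weight, rootProd_signedPerm_of_even (even_mul_neg _),
    prod_comp_signedPerm fun _ θ => (endFactor a θ * endFactor a (-θ))⁻¹]
  exact congrArg _ (prod_congr rfl fun j _ => apply_negIf_of_even
    (c := fun θ => (endFactor a θ * endFactor a (-θ))⁻¹) (even_mul_neg _) _ _)

lemma exists_hasHardyOrderAlong_crossTerm (ht : ‖t‖ < 1) (ha : ∀ r, ‖a r‖ < 1) {l : ι → ℕ}
    (hl : Antitone l) (m : ι → ℕ) (w : Equiv.Perm ι × (ι → Bool)) :
    ∃ F, HasHardyOrderAlong l (∑ j, l j * (l j - m (w.1.symm j) : ℤ)) F ∧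
      crossTerm t a l m w =ᵐ[volume] F := by
  obtain ⟨A, hA, A_eq⟩ := exists_hasHardyOrderAlong_rootProd ht hl w
  obtain ⟨B, hB, B_eq⟩ := exists_hasHardyOrderAlong_prod_endTerm ha l m w
  refine ⟨fun x => A x * B x, by simpa using hA.mul hB, ?_⟩
  filter_upwards [ae_isRegular] with x hx
  simp only [← A_eq x hx, ← B_eq x hx, crossTerm, waveTerm, weight, Pi.neg_apply]
  ring

lemma integrable_crossTerm (ht : ‖t‖ < 1) (ha : ∀ r, ‖a r‖ < 1) {l : ι → ℕ} (hl : Antitone l)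
    (m : ι → ℕ) (w : Equiv.Perm ι × (ι → Bool)) : Integrable (crossTerm t a l m w) := by
  obtain ⟨F, hF, hF_eq⟩ := exists_hasHardyOrderAlong_crossTerm ht ha hl m w
  refine Integrable.congr ?_ hF_eq.symm
  exact hF.continuous.integrable_of_hasCompactSupport (.of_compactSpace F)

lemma integrable_crossTerm_comp_signedPerm (ht : ‖t‖ < 1) (ha : ∀ r, ‖a r‖ < 1) {l : ι → ℕ}
    (hl : Antitone l) (m : ι → ℕ) (v w : Equiv.Perm ι × (ι → Bool)) :
    Integrable fun x => crossTerm t a l m v (signedPerm w x) :=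
  (measurePreserving_signedPerm w).integrable_comp_of_integrable (integrable_crossTerm ht ha hl m v)

lemma integral_crossTerm_eq_zero (ht : ‖t‖ < 1) (ha : ∀ r, ‖a r‖ < 1) {l m : ι → ℕ}
    (hl : Antitone l) (hm : Antitone m) (hne : l ≠ m) (hle : ∑ j, m j * m j ≤ ∑ j, l j * l j)
    (w : Equiv.Perm ι × (ι → Bool)) : ∫ x, crossTerm t a l m w x = 0 := by
  obtain ⟨F, hF, hF_eq⟩ := exists_hasHardyOrderAlong_crossTerm ht ha hl m w
  rw [integral_congr_ae hF_eq]
  exact hF.integral_eq_zero (one_le_sum_mul_sub_comp_perm hl hm hne hle w.1.symm)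

lemma exists_waveSum_mul_eq_sum_crossTerm :
    ∃ v : Equiv.Perm ι × (ι → Bool) → Equiv.Perm ι × (ι → Bool) → Equiv.Perm ι × (ι → Bool),
      ∀ (l m : ι → ℕ) (x : ι → Angle),
        waveSum t a l x * waveSum t a m x * weight t a x =
          ∑ w, ∑ w', crossTerm t a l m (v w w') (signedPerm w x) := by
  choose v hv using exists_signedPerm_eq_comp (ι := ι) (G := Angle)
  refine ⟨v, fun l m x => ?_⟩
  rw [← waveSum_neg l]
  simp only [waveSum, crossTerm, weight_signedPerm, ← hv, signedPerm_neg]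
  rw [sum_mul_sum]
  simp only [sum_mul]

lemma integrable_waveSum_mul (ht : ‖t‖ < 1) (ha : ∀ r, ‖a r‖ < 1) {l : ι → ℕ} (hl : Antitone l)
    (m : ι → ℕ) :
    Integrable fun x : ι → Angle => waveSum t a l x * waveSum t a m x * weight t a x := by
  obtain ⟨v, hv⟩ := exists_waveSum_mul_eq_sum_crossTerm (ι := ι) (t := t) (a := a)
  simp_rw [hv]
  exact integrable_finsetSum _ fun w _ => integrable_finsetSum _ fun w' _ =>
    integrable_crossTerm_comp_signedPerm ht ha hl m (v w w') w

lemma integral_waveSum_mul_eq_zero_of_le (ht : ‖t‖ < 1) (ha : ∀ r, ‖a r‖ < 1) {l m : ι → ℕ}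
    (hl : Antitone l) (hm : Antitone m) (hne : l ≠ m)
    (hle : ∑ j, m j * m j ≤ ∑ j, l j * l j) :
    ∫ x : ι → Angle, waveSum t a l x * waveSum t a m x * weight t a x = 0 := by
  obtain ⟨v, hv⟩ := exists_waveSum_mul_eq_sum_crossTerm (ι := ι) (t := t) (a := a)
  simp_rw [hv]
  have integrable (w w' : Equiv.Perm ι × (ι → Bool)) :=
    integrable_crossTerm_comp_signedPerm ht ha hl m (v w w') w
  rw [integral_finsetSum _ fun w _ => integrable_finsetSum _ fun w' _ => integrable w w']
  refine sum_eq_zero fun w _ => ?_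
  rw [integral_finsetSum _ fun w' _ => integrable w w']
  refine sum_eq_zero fun w' _ => ?_
  rw [integral_comp_eq_of_measurePreserving (measurePreserving_signedPerm w)
    (integrable_crossTerm ht ha hl m (v w w')).aestronglyMeasurable]
  exact integral_crossTerm_eq_zero ht ha hl hm hne hle (v w w')

theorem integral_waveSum_mul_eq_zero (ht : ‖t‖ < 1) (ha : ∀ r, ‖a r‖ < 1) {l m : ι → ℕ}
    (hl : Antitone l) (hm : Antitone m) (hne : l ≠ m) :
    ∫ x : ι → Angle, waveSum t a l x * waveSum t a m x * weight t a x = 0 := by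
  rcases le_total (∑ j, m j * m j) (∑ j, l j * l j) with hle | hle
  · exact integral_waveSum_mul_eq_zero_of_le ht ha hl hm hne hle
  · simpa only [mul_comm (waveSum t a m _)] using
      integral_waveSum_mul_eq_zero_of_le ht ha hm hl hne.symm hle

end HallLittlewood

open scoped ComplexConjugate

section RealParameters

variable {ι : Type*} [Fintype ι] [LinearOrder ι] {t : ℂ} {a : Fin 4 → ℂ}

lemma conj_rootFactor (ht : conj t = t) (θ : Angle) :
    conj (rootFactor t θ) = rootFactor t (-θ) := by
  simp [rootFactor, conj_cis, ht]

lemma conj_endFactor (ha : ∀ r, conj (a r) = a r) (θ : Angle) :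
    conj (endFactor a θ) = endFactor a (-θ) := by
  simp [endFactor, endPoly, conj_cis, ha]

lemma conj_endTerm (ha : ∀ r, conj (a r) = a r) (m : ℕ) (θ : Angle) :
    conj (endTerm a m θ) = endTerm a m (-θ) := by
  simp [endTerm, apply_ite conj, conj_endFactor ha, conj_cis]

lemma conj_rootProd_rootFactor (ht : conj t = t) (x : ι → Angle) :
    conj (rootProd (rootFactor t) x) = rootProd (rootFactor t) (-x) := by
  rw [rootProd_neg]
  simp only [rootProd, map_prod, map_mul, conj_rootFactor ht]

lemma conj_waveSum (ht : conj t = t) (ha : ∀ r, conj (a r) = a r) (l : ι → ℕ) (x : ι → Angle) :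
    conj (waveSum t a l x) = waveSum t a l x := by
  refine Eq.trans ?_ (waveSum_neg l x)
  simp only [waveSum, waveTerm, map_sum, map_mul, map_prod, conj_rootProd_rootFactor ht,
    conj_endTerm ha, signedPerm_neg, Pi.neg_apply]

lemma weight_eq_norm_sq (ht : conj t = t) (ha : ∀ r, conj (a r) = a r) (x : ι → Angle) :
    weight t a x =
      (‖(rootProd (rootFactor t) x * ∏ j, endFactor a (x j))⁻¹‖ : ℂ) ^ 2 := by
  rw [← Complex.mul_conj', map_inv₀, map_mul, map_prod, conj_rootProd_rootFactor ht, rootProd_neg]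
  simp only [weight, rootProd, conj_endFactor ha, mul_inv, prod_mul_distrib, prod_inv_distrib]
  ring

end RealParameters

section Transfer

variable {n : ℕ}

/-- The point of the torus with real coordinates `xi`. -/
def toTorus (xi : Fin n → ℝ) : Fin n → Angle := fun j => (xi j : Angle)

lemma setIntegral_box_comp_toTorus {F : (Fin n → Angle) → ℂ} (hF : AEStronglyMeasurable F) :
    ∫ xi in box n, F (toTorus xi) = ∫ x, F x := by
  have restrict_box : (volume : Measure (Fin n → ℝ)).restrict (box n) =
      Measure.pi fun _ => volume.restrict (Set.Ioc 0 (0 + 2 * Real.pi)) := by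
    rw [box, volume_pi, Measure.restrict_pi_pi, zero_add]
    simp only [restrict_Ioc_eq_restrict_Icc]
  rw [restrict_box]
  exact integral_comp_eq_of_measurePreserving
    (measurePreserving_pi _ _ fun _ => AddCircle.measurePreserving_mk (2 * Real.pi) 0) hF

lemma act_ofReal (w : Equiv.Perm (Fin n) × (Fin n → Bool)) (xi : Fin n → ℝ) :
    act n w (fun j => (xi j : ℂ)) = fun j => ((signedPerm w xi j : ℝ) : ℂ) := by
  ext j
  cases h : w.2 j <;> simp [act, signedPerm, negIf, h]

lemma toTorus_signedPerm (w : Equiv.Perm (Fin n) × (Fin n → Bool)) (xi : Fin n → ℝ) :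
    toTorus (signedPerm w xi) = signedPerm w (toTorus xi) := by
  ext j
  cases h : w.2 j <;> simp [toTorus, signedPerm, negIf, h]

lemma rootProd_toTorus (c : Angle → ℂ) (xi : Fin n → ℝ) :
    rootProd c (toTorus xi) = ∏ j, ∏ k, if j < k then
      c (xi j - xi k : ℝ) * c (xi j + xi k : ℝ) else 1 := by
  rw [rootProd, prod_filter, Fintype.prod_prod_type]
  rfl

lemma rootFactor_coe (t : ℂ) (x : ℝ) :
    rootFactor t x = (1 - t * exp (I * x)) / (1 - exp (I * x)) := by
  rw [rootFactor, cis_coe]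

lemma endFactor_coe (t0 t1 t2 t3 : ℂ) (x : ℝ) :
    endFactor ![t0, t1, t2, t3] x =
      ((1 - t0 * exp (I * x)) * (1 - t1 * exp (I * x)) * (1 - t2 * exp (I * x)) *
        (1 - t3 * exp (I * x))) / (1 - exp (2 * I * x)) := by
  simp [endFactor, endPoly, Fin.prod_univ_four, cis_coe, ← Complex.exp_nat_mul, mul_assoc]

lemma Cf_mul_exp_eq_waveTerm (t t0 t1 t2 t3 : ℂ) (l : Fin n → ℕ) (xi : Fin n → ℝ) :
    Cf n t t0 t1 t2 t3 (fun j => l j) (fun j => (xi j : ℂ)) *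
        exp (-I * ∑ j, ((l j : ℤ) : ℂ) * (xi j : ℂ)) =
      waveTerm t ![t0, t1, t2, t3] l (toTorus xi) := by
  have exp_eq : exp (-I * ∑ j, ((l j : ℤ) : ℂ) * (xi j : ℂ)) =
      ∏ j, (cis (xi j) ^ l j)⁻¹ := by
    rw [mul_sum, Complex.exp_sum]
    refine prod_congr rfl fun j _ => ?_
    rw [cis_coe, ← Complex.exp_nat_mul, ← Complex.exp_neg]
    congr 1
    push_cast
    ring
  rw [waveTerm, rootProd_toTorus, exp_eq, Cf, mul_assoc, ← prod_mul_distrib]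
  simp only [endTerm, toTorus, endFactor_coe, rootFactor_coe, ofReal_sub, ofReal_add,
    div_mul_div_comm, Nat.cast_pos]

lemma P_eq_ccf_mul_waveSum (t t0 t1 t2 t3 : ℂ) (l : Fin n → ℕ) (xi : Fin n → ℝ) :
    P n t t0 t1 t2 t3 (fun j => l j) (fun j => (xi j : ℂ)) =
      ccf n t t0 t1 t2 t3 (fun j => l j) *
        waveSum t ![t0, t1, t2, t3] l (toTorus xi) := by
  rw [P, waveSum]
  simp only [act_ofReal, Cf_mul_exp_eq_waveTerm, toTorus_signedPerm]

-- At the poles of `C_λ` both sides vanish, the right one because `x / 0 = 0` and `0⁻¹ = 0`.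
lemma Dlt_eq_inv (t t0 t1 t2 t3 : ℂ) (xi : Fin n → ℝ) :
    Dlt n t t0 t1 t2 t3 (fun j => (xi j : ℂ)) =
      (rootProd (rootFactor t) (toTorus xi) *
        ∏ j, endFactor ![t0, t1, t2, t3] (toTorus xi j))⁻¹ := by
  rw [rootProd_toTorus, mul_inv, ← prod_inv_distrib, ← prod_inv_distrib, Dlt]
  simp only [← prod_inv_distrib, apply_ite (·⁻¹), inv_one, toTorus, endFactor_coe, rootFactor_coe,
    div_mul_div_comm, inv_div, ofReal_sub, ofReal_add]

end Transfer

lemma norm_ofReal_lt_one {r : ℝ} (hr : r ∈ Set.Ioo (-1 : ℝ) 1) : ‖(r : ℂ)‖ < 1 := by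
  simpa [abs_lt] using hr

lemma exists_antitone_eq_of_isPart {n : ℕ} {lam : Fin n → ℤ} (hlam : IsPart n lam) :
    ∃ l : Fin n → ℕ, Antitone l ∧ lam = fun j => (l j : ℤ) := by
  obtain ⟨antitone, nonneg⟩ := hlam
  lift lam to Fin n → ℕ using nonneg
  exact ⟨lam, fun i j hij => Int.ofNat_le.1 (antitone i j hij), rfl⟩

/-- orthogonality of the hyperoctahedral Hall-Littlewood functions. -/
theorem orthogonality (n : ℕ) (hn : 1 ≤ n) (t t0 t1 t2 t3 : ℝ)
    (ht : t ∈ Set.Ioo (-1 : ℝ) 1) (htz : t ≠ 0)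
    (h0 : t0 ∈ Set.Ioo (-1 : ℝ) 1) (h0z : t0 ≠ 0)
    (h1 : t1 ∈ Set.Ioo (-1 : ℝ) 1) (h1z : t1 ≠ 0)
    (h2 : t2 ∈ Set.Ioo (-1 : ℝ) 1) (h2z : t2 ≠ 0)
    (h3 : t3 ∈ Set.Ioo (-1 : ℝ) 1) (h3z : t3 ≠ 0)
    (lam mu : Fin n → ℤ) (hlam : IsPart n lam) (hmu : IsPart n mu) (hne : lam ≠ mu) :
    ∫ xi in box n,
        P n (t : ℂ) (t0 : ℂ) (t1 : ℂ) (t2 : ℂ) (t3 : ℂ) lam (fun j => (xi j : ℂ)) *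
        (starRingEnd ℂ) (P n (t : ℂ) (t0 : ℂ) (t1 : ℂ) (t2 : ℂ) (t3 : ℂ) mu (fun j => (xi j : ℂ))) *
        ((‖Dlt n (t : ℂ) (t0 : ℂ) (t1 : ℂ) (t2 : ℂ) (t3 : ℂ)
          (fun j => (xi j : ℂ))‖ : ℂ)) ^ 2 = 0 := by
  obtain ⟨l, hl, rfl⟩ := exists_antitone_eq_of_isPart hlam
  obtain ⟨m, hm, rfl⟩ := exists_antitone_eq_of_isPart hmu
  let a : Fin 4 → ℂ := ![t0, t1, t2, t3]
  have ha : ∀ r, ‖a r‖ < 1 := by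
    simp [a, Fin.forall_fin_succ, norm_ofReal_lt_one, *, -Complex.norm_real]
  have conj_a : ∀ r, conj (a r) = a r := by simp [a, Fin.forall_fin_succ]
  have ht' := norm_ofReal_lt_one ht
  have integral_eq_zero := integral_waveSum_mul_eq_zero ht' ha hl hm fun h => hne (by rw [h])
  rw [← setIntegral_box_comp_toTorus (integrable_waveSum_mul ht' ha hl m).aestronglyMeasurable]
    at integral_eq_zero
  rw [← mul_zero (ccf n t t0 t1 t2 t3 (fun j => l j) * conj (ccf n t t0 t1 t2 t3 fun j => m j)),
    ← integral_eq_zero, ← integral_const_mul]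
  congr with xi
  rw [P_eq_ccf_mul_waveSum, P_eq_ccf_mul_waveSum, Dlt_eq_inv, map_mul,
    conj_waveSum (conj_ofReal t) conj_a, weight_eq_norm_sq (conj_ofReal t) conj_a]
  ring

end QB

end
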